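/- Let n, m, k be positive integers, X̂ ∈ ℝ^{n×m}, R > 0, and let p_U¹, p_U², p_V¹, p_V² ∈ [1,∞] with Hölder conjugates q_U¹, q_U², q_V¹, q_V² respectively. Define L = (1/n) sup{ ‖X̂U‖_{q_V¹×q_V²} : U ∈ ℝ^{m×k}, ‖U‖_{p_U¹×p_U²} ≤ 1 }. (i) For any U ∈ ℝ^{m×k} with c_i := ‖X̂(:,i)‖_{q_V¹}·‖U(i,:)‖_{q_V²} > 0 for all i, the distribution p*_i = c_i/Σ_ι c_ι minimizes E[ ‖ξ_U(p)‖_{q_V¹×q_V²}² ] = Σ_i (1/p_i) c_i² over probability vectors p with positive entries, with minimal value (Σ_i c_i)². (ii) If moreover p_U² ≤ q_V², then (1/n²) sup{ E[ ‖X̂U − ξ_U(p*(U))‖_{q_V¹×q_V²}² ] : ‖U‖_{p_U¹×p_U²} ≤ R, all c_i(U) > 0 } ≤ 2 R² L² + (2/n²) R² ‖X̂ᵀ‖_{q_U¹×q_V¹}². -/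

import Mathlib

open scoped ENNReal BigOperators
open Matrix

/-- The `ℓ_p` norm of a finitely-indexed real vector, `p ∈ [1,∞]`. -/
noncomputable def lpNorm {ι : Type*} [Fintype ι] (p : ℝ≥0∞) (v : ι → ℝ) : ℝ :=
  if p = ∞ then ⨆ i, |v i| else (∑ i, |v i| ^ p.toReal) ^ (1 / p.toReal)

/-- The mixed norm `‖A‖_{p×q}`. -/
noncomputable def mixedNorm {ι κ : Type*} [Fintype ι] [Fintype κ]
    (p q : ℝ≥0∞) (A : Matrix ι κ ℝ) : ℝ :=
  lpNorm p (fun i => lpNorm q (A i))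

/-- The partial-sampling primal estimate `ξ_U(p) = X̂ (e_i e_iᵀ / p_i) U`
as a function of the drawn index `i`. -/
noncomputable def xiPart {n m k : ℕ} (Xh : Matrix (Fin n) (Fin m) ℝ)
    (U : Matrix (Fin m) (Fin k) ℝ) (p : Fin m → ℝ) (i : Fin m) :
    Matrix (Fin n) (Fin k) ℝ :=
  Matrix.of fun r c => Xh r i * U i c / p i

/-!
Since `X̂ U` is the sum of the rank-one matrices `X̂(:,i) U(i,:)`, of mixed norm
`c_i = ‖X̂(:,i)‖ ‖U(i,:)‖`, the estimate drawn at `i` has norm `c_i / p_i`. By Cauchy-Schwarz, its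
second moment `∑ c_i² / p_i` is minimal when `p` is proportional to `c`, with value `(∑ c_i)²`.

The variance is at most `2 ‖X̂ U‖² + 2 (∑ c_i)²`, where `‖X̂ U‖ ≤ ‖U‖ n L` by homogeneity. Since
`p_U² ≤ q_V²`, replacing `‖U(i,:)‖_{q_V²}` by `‖U(i,:)‖_{p_U²}` only increases `∑ c_i`, and Hölder's
inequality over `i` then gives `∑ c_i ≤ ‖U‖ ‖X̂ᵀ‖`; the same bound shows that the supremum defining
`L` is finite.
-/

section LpNorm

variable {ι : Type*} [Fintype ι] {p q : ℝ≥0∞}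

theorem lpNorm_top (v : ι → ℝ) : lpNorm ∞ v = ⨆ i, |v i| := if_pos rfl

theorem lpNorm_of_ne_top (hp : p ≠ ∞) (v : ι → ℝ) :
    lpNorm p v = (∑ i, |v i| ^ p.toReal) ^ (1 / p.toReal) := if_neg hp

theorem lpNorm_one (v : ι → ℝ) : lpNorm 1 v = ∑ i, |v i| := by simp [lpNorm]

theorem lpNorm_eq_norm_toLp (hp : p ≠ 0) (v : ι → ℝ) : lpNorm p v = ‖WithLp.toLp p v‖ := by
  obtain rfl | hp' := eq_or_ne p ∞
  · exact lpNorm_top v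
  · rw [lpNorm_of_ne_top hp', PiLp.norm_eq_sum (ENNReal.toReal_pos hp hp')]
    rfl

theorem lpNorm_nonneg (p : ℝ≥0∞) (v : ι → ℝ) : 0 ≤ lpNorm p v := by
  unfold lpNorm
  split_ifs
  · exact Real.iSup_nonneg fun i => abs_nonneg (v i)
  · positivity

theorem lpNorm_neg (p : ℝ≥0∞) (v : ι → ℝ) : lpNorm p (-v) = lpNorm p v := by simp [lpNorm]

theorem lpNorm_abs (p : ℝ≥0∞) (v : ι → ℝ) : lpNorm p (fun i => |v i|) = lpNorm p v := by
  simp [lpNorm]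

theorem lpNorm_mono {v w : ι → ℝ} (h : ∀ i, |v i| ≤ |w i|) : lpNorm p v ≤ lpNorm p w := by
  unfold lpNorm
  split_ifs
  · exact ciSup_mono (Set.finite_range _).bddAbove h
  · exact Real.rpow_le_rpow (by positivity)
      (Finset.sum_le_sum fun i _ =>
        Real.rpow_le_rpow (abs_nonneg _) (h i) ENNReal.toReal_nonneg)
      (by positivity)

theorem lpNorm_smul (hp : p ≠ 0) (a : ℝ) (v : ι → ℝ) : lpNorm p (a • v) = |a| * lpNorm p v := by
  obtain rfl | hp' := eq_or_ne p ∞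
  · simp only [lpNorm_top, Pi.smul_apply, smul_eq_mul, abs_mul,
      Real.mul_iSup_of_nonneg (abs_nonneg a)]
  · have hp₀ : p.toReal ≠ 0 := (ENNReal.toReal_pos hp hp').ne'
    simp only [lpNorm_of_ne_top hp', Pi.smul_apply, smul_eq_mul, abs_mul,
      Real.mul_rpow (abs_nonneg _) (abs_nonneg _), ← Finset.mul_sum]
    rw [Real.mul_rpow (by positivity) (by positivity), one_div,
      Real.rpow_rpow_inv (abs_nonneg a) hp₀]

theorem lpNorm_add_le (hp : 1 ≤ p) (v w : ι → ℝ) :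
    lpNorm p (v + w) ≤ lpNorm p v + lpNorm p w := by
  have : Fact (1 ≤ p) := ⟨hp⟩
  simp only [lpNorm_eq_norm_toLp (one_pos.trans_le hp).ne', WithLp.toLp_add]
  exact norm_add_le _ _

theorem lpNorm_rpow_toReal (hp : p ≠ 0) (hp' : p ≠ ∞) (v : ι → ℝ) :
    lpNorm p v ^ p.toReal = ∑ i, |v i| ^ p.toReal := by
  rw [lpNorm_of_ne_top hp', one_div,
    Real.rpow_inv_rpow (by positivity) (ENNReal.toReal_pos hp hp').ne']

theorem abs_le_lpNorm (hp : p ≠ 0) (v : ι → ℝ) (i : ι) : |v i| ≤ lpNorm p v := by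
  obtain rfl | hp' := eq_or_ne p ∞
  · rw [lpNorm_top]
    exact le_ciSup (Set.finite_range fun i => |v i|).bddAbove i
  · rw [← Real.rpow_le_rpow_iff (abs_nonneg _) (lpNorm_nonneg p v) (ENNReal.toReal_pos hp hp'),
      lpNorm_rpow_toReal hp hp']
    exact Finset.single_le_sum (f := fun i => |v i| ^ p.toReal) (fun i _ => by positivity)
      (Finset.mem_univ i)

theorem lpNorm_anti (hp : p ≠ 0) (hpq : p ≤ q) (v : ι → ℝ) : lpNorm q v ≤ lpNorm p v := by
  obtain rfl | hq := eq_or_ne q ∞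
  · rw [lpNorm_top]
    exact Real.iSup_le (abs_le_lpNorm hp v) (lpNorm_nonneg p v)
  have hp' : p ≠ ∞ := ne_top_of_le_ne_top hq hpq
  have hq₀ : q ≠ 0 := (pos_iff_ne_zero.2 hp |>.trans_le hpq).ne'
  have hp_pos : 0 < p.toReal := ENNReal.toReal_pos hp hp'
  have hd : 0 ≤ q.toReal - p.toReal := sub_nonneg.2 (ENNReal.toReal_mono hq hpq)
  have rpow_split {x : ℝ} (hx : 0 ≤ x) :
      x ^ q.toReal = x ^ p.toReal * x ^ (q.toReal - p.toReal) := by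
    rw [← Real.rpow_add_of_nonneg hx hp_pos.le hd, add_sub_cancel]
  rw [← Real.rpow_le_rpow_iff (lpNorm_nonneg q v) (lpNorm_nonneg p v) (ENNReal.toReal_pos hq₀ hq)]
  calc lpNorm q v ^ q.toReal
      = ∑ i, |v i| ^ p.toReal * |v i| ^ (q.toReal - p.toReal) := by
        simp only [lpNorm_rpow_toReal hq₀ hq, rpow_split (abs_nonneg _)]
    _ ≤ ∑ i, |v i| ^ p.toReal * lpNorm p v ^ (q.toReal - p.toReal) := by
        gcongr with i
        exact abs_le_lpNorm hp v i
    _ = lpNorm p v ^ q.toReal := by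
        rw [← Finset.sum_mul, ← lpNorm_rpow_toReal hp hp', ← rpow_split (lpNorm_nonneg p v)]

theorem sum_abs_mul_abs_le_lpNorm_mul_lpNorm [p.HolderConjugate q] (v w : ι → ℝ) :
    ∑ i, |v i| * |w i| ≤ lpNorm p v * lpNorm q w := by
  obtain rfl | hp := eq_or_ne p ∞
  · obtain rfl := ENNReal.HolderConjugate.unique ∞ q 1
    rw [lpNorm_one, Finset.mul_sum]
    gcongr with i
    exact abs_le_lpNorm ENNReal.top_ne_zero v i
  obtain rfl | hq := eq_or_ne q ∞
  · obtain rfl := ENNReal.HolderConjugate.unique ∞ p 1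
    rw [lpNorm_one, Finset.sum_mul]
    gcongr with i
    exact abs_le_lpNorm ENNReal.top_ne_zero w i
  · rw [lpNorm_of_ne_top hp, lpNorm_of_ne_top hq]
    simpa only [abs_abs] using Real.inner_le_Lp_mul_Lq Finset.univ (fun i => |v i|)
      (fun i => |w i|) (ENNReal.HolderConjugate.toReal_of_ne_top hp hq)

end LpNorm

section MixedNorm

variable {ι κ : Type*} [Fintype ι] [Fintype κ] {p q : ℝ≥0∞}

theorem mixedNorm_nonneg (p q : ℝ≥0∞) (A : Matrix ι κ ℝ) : 0 ≤ mixedNorm p q A :=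
  lpNorm_nonneg p _

theorem mixedNorm_smul (hp : p ≠ 0) (hq : q ≠ 0) (a : ℝ) (A : Matrix ι κ ℝ) :
    mixedNorm p q (a • A) = |a| * mixedNorm p q A := by
  have rows : (fun i => lpNorm q ((a • A) i)) = |a| • fun i => lpNorm q (A i) :=
    funext fun i => lpNorm_smul hq a (A i)
  rw [mixedNorm, rows, lpNorm_smul hp, abs_abs, mixedNorm]

theorem mixedNorm_neg (p q : ℝ≥0∞) (A : Matrix ι κ ℝ) :
    mixedNorm p q (-A) = mixedNorm p q A :=
  congrArg (lpNorm p) (funext fun i => lpNorm_neg q (A i))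

theorem mixedNorm_add_le (hp : 1 ≤ p) (hq : 1 ≤ q) (A B : Matrix ι κ ℝ) :
    mixedNorm p q (A + B) ≤ mixedNorm p q A + mixedNorm p q B := by
  refine (lpNorm_mono fun i => ?_).trans (lpNorm_add_le hp _ _)
  rw [abs_of_nonneg (lpNorm_nonneg q _)]
  exact (lpNorm_add_le hq (A i) (B i)).trans (le_abs_self _)

theorem mixedNorm_sub_le (hp : 1 ≤ p) (hq : 1 ≤ q) (A B : Matrix ι κ ℝ) :
    mixedNorm p q (A - B) ≤ mixedNorm p q A + mixedNorm p q B := by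
  rw [sub_eq_add_neg, ← mixedNorm_neg p q B]
  exact mixedNorm_add_le hp hq A (-B)

theorem mixedNorm_sum_le {τ : Type*} (hp : 1 ≤ p) (hq : 1 ≤ q) (s : Finset τ)
    (A : τ → Matrix ι κ ℝ) : mixedNorm p q (∑ j ∈ s, A j) ≤ ∑ j ∈ s, mixedNorm p q (A j) := by
  have mixedNorm_zero : mixedNorm p q (0 : Matrix ι κ ℝ) = 0 := by
    simpa only [zero_smul, abs_zero, zero_mul] using
      mixedNorm_smul (one_pos.trans_le hp).ne' (one_pos.trans_le hq).ne' 0 (0 : Matrix ι κ ℝ)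
  exact Finset.le_sum_of_subadditive _ mixedNorm_zero.le (mixedNorm_add_le hp hq) s A

theorem mixedNorm_vecMulVec (hp : p ≠ 0) (hq : q ≠ 0) (x : ι → ℝ) (u : κ → ℝ) :
    mixedNorm p q (vecMulVec x u) = lpNorm p x * lpNorm q u := by
  have rows : (fun i => lpNorm q (vecMulVec x u i)) = lpNorm q u • fun i => |x i| :=
    funext fun i => (lpNorm_smul hq (x i) u).trans (mul_comm _ _)
  rw [mixedNorm, rows, lpNorm_smul hp, lpNorm_abs, abs_of_nonneg (lpNorm_nonneg q u), mul_comm]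

theorem sum_mul_sq_mixedNorm_sub_le {τ : Type*} [Fintype τ] (hp : 1 ≤ p) (hq : 1 ≤ q)
    {w : τ → ℝ} (hw : w ∈ stdSimplex ℝ τ) (A : Matrix ι κ ℝ) (Z : τ → Matrix ι κ ℝ) :
    ∑ j, w j * mixedNorm p q (A - Z j) ^ 2 ≤
      2 * (mixedNorm p q A ^ 2 + ∑ j, w j * mixedNorm p q (Z j) ^ 2) := by
  have sq_le (j : τ) : mixedNorm p q (A - Z j) ^ 2 ≤
      2 * (mixedNorm p q A ^ 2 + mixedNorm p q (Z j) ^ 2) :=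
    (pow_le_pow_left₀ (mixedNorm_nonneg p q _) (mixedNorm_sub_le hp hq A (Z j)) 2).trans add_sq_le
  calc ∑ j, w j * mixedNorm p q (A - Z j) ^ 2
      ≤ ∑ j, w j * (2 * (mixedNorm p q A ^ 2 + mixedNorm p q (Z j) ^ 2)) :=
        Finset.sum_le_sum fun j _ => mul_le_mul_of_nonneg_left (sq_le j) (hw.1 j)
    _ = 2 * ((∑ j, w j) * mixedNorm p q A ^ 2 + ∑ j, w j * mixedNorm p q (Z j) ^ 2) := by
        simp only [Finset.sum_mul, ← Finset.sum_add_distrib, Finset.mul_sum, mul_add,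
          mul_left_comm]
    _ = 2 * (mixedNorm p q A ^ 2 + ∑ j, w j * mixedNorm p q (Z j) ^ 2) := by
        rw [hw.2, one_mul]

end MixedNorm

section ColumnRowWeight

variable {ι κ σ : Type*} [Fintype ι] [Fintype σ]

/-- The weight `c_i = ‖X(:,i)‖_p ‖U(i,:)‖_q`, which is the `p×q` norm of the `i`-th rank-one term
of `X * U`. -/
noncomputable def columnRowWeight (p q : ℝ≥0∞) (X : Matrix ι κ ℝ) (U : Matrix κ σ ℝ) (i : κ) : ℝ :=
  lpNorm p (fun r => X r i) * lpNorm q (U i)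

theorem columnRowWeight_nonneg (p q : ℝ≥0∞) (X : Matrix ι κ ℝ) (U : Matrix κ σ ℝ) (i : κ) :
    0 ≤ columnRowWeight p q X U i :=
  mul_nonneg (lpNorm_nonneg p _) (lpNorm_nonneg q _)

variable [Fintype κ]

theorem mixedNorm_mul_le_sum_columnRowWeight {p q : ℝ≥0∞} (hp : 1 ≤ p) (hq : 1 ≤ q)
    (X : Matrix ι κ ℝ) (U : Matrix κ σ ℝ) :
    mixedNorm p q (X * U) ≤ ∑ i, columnRowWeight p q X U i := by
  have rank_one_sum : X * U = ∑ i, vecMulVec (fun r => X r i) (U i) := by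
    ext r c
    simp only [mul_apply, Matrix.sum_apply, vecMulVec_apply]
  rw [rank_one_sum]
  refine (mixedNorm_sum_le hp hq _ _).trans_eq (Finset.sum_congr rfl fun i _ => ?_)
  exact mixedNorm_vecMulVec (one_pos.trans_le hp).ne' (one_pos.trans_le hq).ne' _ _

theorem sum_columnRowWeight_le {a b s p q : ℝ≥0∞} [a.HolderConjugate b] (hs : s ≠ 0)
    (hsq : s ≤ q) (X : Matrix ι κ ℝ) (U : Matrix κ σ ℝ) :
    ∑ i, columnRowWeight p q X U i ≤ mixedNorm a s U * mixedNorm b p Xᵀ := by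
  calc ∑ i, columnRowWeight p q X U i
      ≤ ∑ i, |lpNorm s (U i)| * |lpNorm p (Xᵀ i)| := by
        refine Finset.sum_le_sum fun i _ => ?_
        rw [abs_of_nonneg (lpNorm_nonneg s _), abs_of_nonneg (lpNorm_nonneg p _), mul_comm]
        exact mul_le_mul_of_nonneg_left (lpNorm_anti hs hsq (U i)) (lpNorm_nonneg p _)
    _ ≤ mixedNorm a s U * mixedNorm b p Xᵀ :=
        sum_abs_mul_abs_le_lpNorm_mul_lpNorm (fun i => lpNorm s (U i)) fun i => lpNorm p (Xᵀ i)

/-- The optimal sampling distribution `p*_i = c_i / ∑ c`, which is a probability vector only if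
some weight `c_i` is nonzero. -/
noncomputable def optimalDistribution (p q : ℝ≥0∞) (X : Matrix ι κ ℝ) (U : Matrix κ σ ℝ) (i : κ) :
    ℝ :=
  columnRowWeight p q X U i / ∑ i', columnRowWeight p q X U i'

theorem optimalDistribution_mem_stdSimplex {p q : ℝ≥0∞} {X : Matrix ι κ ℝ} {U : Matrix κ σ ℝ}
    (h : ∃ i, 0 < columnRowWeight p q X U i) :
    optimalDistribution p q X U ∈ stdSimplex ℝ κ := by
  have hc := columnRowWeight_nonneg p q X U
  have sum_pos : 0 < ∑ i, columnRowWeight p q X U i :=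
    let ⟨i, hi⟩ := h
    Finset.sum_pos' (fun i _ => hc i) ⟨i, Finset.mem_univ i, hi⟩
  refine ⟨fun i => div_nonneg (hc i) sum_pos.le, ?_⟩
  simp only [optimalDistribution, ← Finset.sum_div, div_self sum_pos.ne']

end ColumnRowWeight

section MixedOpNorm

variable {ι κ σ : Type*} [Fintype ι] [Fintype κ] [Fintype σ] {a b s p q : ℝ≥0∞}

/-- The norm of `U ↦ X * U` as an operator from `κ × σ` matrices with the `a×s` norm to `ι × σ`
matrices with the `p×q` norm; the column index type `σ` is explicit because `X` does not
determine it. -/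
noncomputable def mixedOpNorm (σ : Type*) [Fintype σ] (a s p q : ℝ≥0∞) (X : Matrix ι κ ℝ) : ℝ :=
  sSup {r : ℝ | ∃ U : Matrix κ σ ℝ, mixedNorm a s U ≤ 1 ∧ r = mixedNorm p q (X * U)}

theorem mixedNorm_mul_le_mixedNorm_mul_mixedNorm_transpose [a.HolderConjugate b] (hp : 1 ≤ p)
    (hq : 1 ≤ q) (hs : s ≠ 0) (hsq : s ≤ q) (X : Matrix ι κ ℝ) (U : Matrix κ σ ℝ) :
    mixedNorm p q (X * U) ≤ mixedNorm a s U * mixedNorm b p Xᵀ :=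
  (mixedNorm_mul_le_sum_columnRowWeight hp hq X U).trans (sum_columnRowWeight_le hs hsq X U)

theorem mixedNorm_mul_le_mixedOpNorm [a.HolderConjugate b] (hp : 1 ≤ p) (hq : 1 ≤ q)
    (hs : s ≠ 0) (hsq : s ≤ q) (X : Matrix ι κ ℝ) {U : Matrix κ σ ℝ} (hU : mixedNorm a s U ≤ 1) :
    mixedNorm p q (X * U) ≤ mixedOpNorm σ a s p q X := by
  refine le_csSup ⟨mixedNorm b p Xᵀ, ?_⟩ ⟨U, hU, rfl⟩
  rintro _ ⟨W, hW, rfl⟩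
  exact (mixedNorm_mul_le_mixedNorm_mul_mixedNorm_transpose hp hq hs hsq X W).trans
    (mul_le_of_le_one_left (mixedNorm_nonneg b p _) hW)

theorem mixedNorm_mul_le_mixedNorm_mul_mixedOpNorm [a.HolderConjugate b] (hp : 1 ≤ p)
    (hq : 1 ≤ q) (hs : s ≠ 0) (hsq : s ≤ q) (X : Matrix ι κ ℝ) (U : Matrix κ σ ℝ) :
    mixedNorm p q (X * U) ≤ mixedNorm a s U * mixedOpNorm σ a s p q X := by
  obtain hU | hU := (mixedNorm_nonneg a s U).eq_or_lt
  · simpa only [← hU, zero_mul] using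
      mixedNorm_mul_le_mixedNorm_mul_mixedNorm_transpose (a := a) (b := b) hp hq hs hsq X U
  · have unit_norm : mixedNorm a s ((mixedNorm a s U)⁻¹ • U) = 1 := by
      rw [mixedNorm_smul (ENNReal.HolderConjugate.ne_zero a b) hs, abs_of_pos (inv_pos.2 hU),
        inv_mul_cancel₀ hU.ne']
    have := mixedNorm_mul_le_mixedOpNorm (b := b) hp hq hs hsq X unit_norm.le
    rwa [Matrix.mul_smul, mixedNorm_smul (one_pos.trans_le hp).ne' (one_pos.trans_le hq).ne',
      abs_of_pos (inv_pos.2 hU), inv_mul_le_iff₀ hU] at this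

end MixedOpNorm

section PartialSampling

variable {n m k : ℕ} {p q : ℝ≥0∞} (X : Matrix (Fin n) (Fin m) ℝ) (U : Matrix (Fin m) (Fin k) ℝ)

theorem mixedNorm_xiPart (hp : p ≠ 0) (hq : q ≠ 0) (w : Fin m → ℝ) (i : Fin m) :
    mixedNorm p q (xiPart X U w i) = columnRowWeight p q X U i / |w i| := by
  have rank_one : xiPart X U w i = (w i)⁻¹ • vecMulVec (fun r => X r i) (U i) := by
    ext r c
    exact div_eq_inv_mul _ _
  rw [rank_one, mixedNorm_smul hp hq, mixedNorm_vecMulVec hp hq, abs_inv, ← div_eq_inv_mul,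
    columnRowWeight]

/-- The second moment `E ‖ξ_U(w)‖²` in the `p×q` norm when the index is drawn from `w`. -/
noncomputable def secondMoment (p q : ℝ≥0∞) (X : Matrix (Fin n) (Fin m) ℝ)
    (U : Matrix (Fin m) (Fin k) ℝ) (w : Fin m → ℝ) : ℝ :=
  ∑ i, w i * mixedNorm p q (xiPart X U w i) ^ 2

theorem secondMoment_eq (hp : p ≠ 0) (hq : q ≠ 0) (w : Fin m → ℝ) :
    secondMoment p q X U w = ∑ i, (1 / w i) * columnRowWeight p q X U i ^ 2 := by
  refine Finset.sum_congr rfl fun i _ => ?_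
  rw [mixedNorm_xiPart X U hp hq, div_pow, sq_abs]
  obtain hw | hw := eq_or_ne (w i) 0
  · simp only [hw, zero_mul, div_zero]
  · field_simp

theorem sq_sum_columnRowWeight_le_secondMoment (hp : p ≠ 0) (hq : q ≠ 0) {w : Fin m → ℝ}
    (hw : w ∈ stdSimplex ℝ (Fin m)) (hsupp : ∀ i, w i = 0 → columnRowWeight p q X U i = 0) :
    (∑ i, columnRowWeight p q X U i) ^ 2 ≤ secondMoment p q X U w := by
  have sq_le (i : Fin m) : columnRowWeight p q X U i ^ 2 ≤
      w i * ((1 / w i) * columnRowWeight p q X U i ^ 2) := by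
    obtain hwi | hwi := eq_or_ne (w i) 0
    · simp only [hwi, hsupp i hwi, zero_mul, zero_pow two_ne_zero, le_refl]
    · rw [← mul_assoc, mul_one_div_cancel hwi, one_mul]
  calc (∑ i, columnRowWeight p q X U i) ^ 2
      ≤ (∑ i, w i) * ∑ i, (1 / w i) * columnRowWeight p q X U i ^ 2 :=
        Finset.sum_sq_le_sum_mul_sum_of_sq_le_mul _ (fun i _ => hw.1 i)
          (fun i _ => mul_nonneg (one_div_nonneg.2 (hw.1 i)) (sq_nonneg _)) fun i _ => sq_le i
    _ = secondMoment p q X U w := by rw [hw.2, one_mul, secondMoment_eq X U hp hq]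

theorem secondMoment_optimalDistribution (hp : p ≠ 0) (hq : q ≠ 0) :
    secondMoment p q X U (optimalDistribution p q X U) =
      (∑ i, columnRowWeight p q X U i) ^ 2 := by
  rw [secondMoment_eq X U hp hq, sq (∑ i, _), Finset.sum_mul]
  refine Finset.sum_congr rfl fun i _ => ?_
  rw [optimalDistribution, one_div_div]
  obtain hc | hc := eq_or_ne (columnRowWeight p q X U i) 0
  · simp only [hc, zero_mul, zero_pow two_ne_zero, mul_zero]
  · field_simp

theorem variance_optimalDistribution_le {a b s : ℝ≥0∞} [a.HolderConjugate b] (hp : 1 ≤ p)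
    (hq : 1 ≤ q) (hs : s ≠ 0) (hsq : s ≤ q) (hc : ∃ i, 0 < columnRowWeight p q X U i) :
    ∑ i, optimalDistribution p q X U i *
        mixedNorm p q (X * U - xiPart X U (optimalDistribution p q X U) i) ^ 2 ≤
      2 * mixedNorm a s U ^ 2 *
        (mixedOpNorm (Fin k) a s p q X ^ 2 + mixedNorm b p Xᵀ ^ 2) := by
  have sum_weight_nonneg : 0 ≤ ∑ i, columnRowWeight p q X U i :=
    Finset.sum_nonneg fun i _ => columnRowWeight_nonneg p q X U i
  calc _ ≤ 2 * (mixedNorm p q (X * U) ^ 2 +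
          secondMoment p q X U (optimalDistribution p q X U)) :=
        sum_mul_sq_mixedNorm_sub_le hp hq (optimalDistribution_mem_stdSimplex hc) _ _
    _ = 2 * (mixedNorm p q (X * U) ^ 2 + (∑ i, columnRowWeight p q X U i) ^ 2) := by
        rw [secondMoment_optimalDistribution X U (one_pos.trans_le hp).ne'
          (one_pos.trans_le hq).ne']
    _ ≤ 2 * ((mixedNorm a s U * mixedOpNorm (Fin k) a s p q X) ^ 2 +
          (mixedNorm a s U * mixedNorm b p Xᵀ) ^ 2) := by
        gcongr
        · exact mixedNorm_nonneg p q _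
        · exact mixedNorm_mul_le_mixedNorm_mul_mixedOpNorm (b := b) hp hq hs hsq X U
        · exact sum_columnRowWeight_le hs hsq X U
    _ = _ := by ring

theorem partial_sampling_primal_general_norms_general {R : ℝ} {pU₁ pU₂ qU₁ qV₁ qV₂ : ℝ≥0∞}
    [pU₁.HolderConjugate qU₁] (hpU₂ : pU₂ ≠ 0) (hqV₁ : qV₁ ≠ 0) (hqV₂ : qV₂ ≠ 0)
    (hc : ∃ i, 0 < columnRowWeight qV₁ qV₂ X U i) :
    (∀ w ∈ stdSimplex ℝ (Fin m), (∀ i, w i = 0 → columnRowWeight qV₁ qV₂ X U i = 0) →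
      secondMoment qV₁ qV₂ X U w = ∑ i, (1 / w i) * columnRowWeight qV₁ qV₂ X U i ^ 2 ∧
      (∑ i, columnRowWeight qV₁ qV₂ X U i) ^ 2 ≤ secondMoment qV₁ qV₂ X U w) ∧
    optimalDistribution qV₁ qV₂ X U ∈ stdSimplex ℝ (Fin m) ∧
    secondMoment qV₁ qV₂ X U (optimalDistribution qV₁ qV₂ X U) =
      (∑ i, columnRowWeight qV₁ qV₂ X U i) ^ 2 ∧
    (1 ≤ qV₁ → 1 ≤ qV₂ → pU₂ ≤ qV₂ → mixedNorm pU₁ pU₂ U ≤ R →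
      (1 / (n : ℝ) ^ 2) * ∑ i, optimalDistribution qV₁ qV₂ X U i *
          mixedNorm qV₁ qV₂ (X * U - xiPart X U (optimalDistribution qV₁ qV₂ X U) i) ^ 2 ≤
        2 * R ^ 2 * (mixedOpNorm (Fin k) pU₁ pU₂ qV₁ qV₂ X / n) ^ 2 +
          (2 / (n : ℝ) ^ 2) * R ^ 2 * mixedNorm qU₁ qV₁ Xᵀ ^ 2) := by
  refine ⟨fun w hw hsupp => ⟨secondMoment_eq X U hqV₁ hqV₂ w,
    sq_sum_columnRowWeight_le_secondMoment X U hqV₁ hqV₂ hw hsupp⟩,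
    optimalDistribution_mem_stdSimplex hc,
    secondMoment_optimalDistribution X U hqV₁ hqV₂, fun h₁ h₂ hle hUR => ?_⟩
  calc _ ≤ (1 / (n : ℝ) ^ 2) * (2 * mixedNorm pU₁ pU₂ U ^ 2 *
          (mixedOpNorm (Fin k) pU₁ pU₂ qV₁ qV₂ X ^ 2 + mixedNorm qU₁ qV₁ Xᵀ ^ 2)) := by
        gcongr
        exact variance_optimalDistribution_le X U h₁ h₂ hpU₂ hle hc
    _ ≤ (1 / (n : ℝ) ^ 2) * (2 * R ^ 2 *
          (mixedOpNorm (Fin k) pU₁ pU₂ qV₁ qV₂ X ^ 2 + mixedNorm qU₁ qV₁ Xᵀ ^ 2)) := by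
        gcongr
        exact mixedNorm_nonneg pU₁ pU₂ U
    _ = _ := by ring

end PartialSampling

/-- Extended Proposition "th:variance-partial-general", primal part: for general
mixed norms, the optimal sampling distribution and the variance proxy bound
(assuming `p_U² ≤ q_V²`). -/
theorem partial_sampling_primal_general_norms
    (n m k : ℕ) (hn : 0 < n) (hm : 0 < m) (hk : 0 < k)
    (Xh : Matrix (Fin n) (Fin m) ℝ) (R : ℝ) (hR : 0 < R)
    (pU₁ pU₂ pV₁ pV₂ qU₁ qU₂ qV₁ qV₂ : ℝ≥0∞)
    (hpU₁ : 1 ≤ pU₁) (hpU₂ : 1 ≤ pU₂) (hpV₁ : 1 ≤ pV₁) (hpV₂ : 1 ≤ pV₂)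
    (hcU₁ : 1 / pU₁ + 1 / qU₁ = 1) (hcU₂ : 1 / pU₂ + 1 / qU₂ = 1)
    (hcV₁ : 1 / pV₁ + 1 / qV₁ = 1) (hcV₂ : 1 / pV₂ + 1 / qV₂ = 1)
    (L : ℝ)
    (hL : L = sSup {r : ℝ | ∃ U : Matrix (Fin m) (Fin k) ℝ,
        mixedNorm pU₁ pU₂ U ≤ 1 ∧ r = mixedNorm qV₁ qV₂ (Xh * U)} / n) :
    -- (i) optimal distribution and second moment
    (∀ U : Matrix (Fin m) (Fin k) ℝ,
      (∀ i, 0 < lpNorm qV₁ (fun r => Xh r i) * lpNorm qV₂ (U i)) →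
      (∀ p : Fin m → ℝ, (∀ i, 0 < p i) → (∑ i, p i) = 1 →
        ((∑ i, p i * (mixedNorm qV₁ qV₂ (xiPart Xh U p i)) ^ 2)
            = ∑ i, (1 / p i) * (lpNorm qV₁ (fun r => Xh r i) * lpNorm qV₂ (U i)) ^ 2) ∧
        (∑ i, lpNorm qV₁ (fun r => Xh r i) * lpNorm qV₂ (U i)) ^ 2
          ≤ ∑ i, p i * (mixedNorm qV₁ qV₂ (xiPart Xh U p i)) ^ 2) ∧
      (∑ i, (lpNorm qV₁ (fun r => Xh r i) * lpNorm qV₂ (U i) /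
              ∑ i', lpNorm qV₁ (fun r => Xh r i') * lpNorm qV₂ (U i')) *
          (mixedNorm qV₁ qV₂ (xiPart Xh U
            (fun i' => lpNorm qV₁ (fun r => Xh r i') * lpNorm qV₂ (U i') /
              ∑ i'', lpNorm qV₁ (fun r => Xh r i'') * lpNorm qV₂ (U i'')) i)) ^ 2)
        = (∑ i, lpNorm qV₁ (fun r => Xh r i) * lpNorm qV₂ (U i)) ^ 2) ∧
    -- (ii) variance proxy bound under `p_U² ≤ q_V²`
    (pU₂ ≤ qV₂ →
      ∀ U : Matrix (Fin m) (Fin k) ℝ, mixedNorm pU₁ pU₂ U ≤ R →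
      (∀ i, 0 < lpNorm qV₁ (fun r => Xh r i) * lpNorm qV₂ (U i)) →
      (1 / (n : ℝ) ^ 2) *
        (∑ i, (lpNorm qV₁ (fun r => Xh r i) * lpNorm qV₂ (U i) /
                ∑ i', lpNorm qV₁ (fun r => Xh r i') * lpNorm qV₂ (U i')) *
          (mixedNorm qV₁ qV₂ (Xh * U - xiPart Xh U
            (fun i' => lpNorm qV₁ (fun r => Xh r i') * lpNorm qV₂ (U i') /
              ∑ i'', lpNorm qV₁ (fun r => Xh r i'') * lpNorm qV₂ (U i'')) i)) ^ 2)
        ≤ 2 * R ^ 2 * L ^ 2 + (2 / (n : ℝ) ^ 2) * R ^ 2 * (mixedNorm qU₁ qV₁ Xhᵀ) ^ 2) := by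
  subst hL
  have conj {p q : ℝ≥0∞} (h : 1 / p + 1 / q = 1) : p.HolderConjugate q :=
    ENNReal.holderConjugate_iff.2 (by simpa only [one_div] using h)
  have := conj hcU₁
  have := conj hcV₁
  have := conj hcV₂
  have one_le_qV₁ : 1 ≤ qV₁ := ENNReal.HolderConjugate.one_le qV₁ pV₁
  have one_le_qV₂ : 1 ≤ qV₂ := ENNReal.HolderConjugate.one_le qV₂ pV₂
  have general (U : Matrix (Fin m) (Fin k) ℝ) (hU : ∀ i, 0 < columnRowWeight qV₁ qV₂ Xh U i) :=
    partial_sampling_primal_general_norms_general Xh U (R := R) (pU₁ := pU₁) (qU₁ := qU₁)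
      (one_pos.trans_le hpU₂).ne' (one_pos.trans_le one_le_qV₁).ne'
      (one_pos.trans_le one_le_qV₂).ne' ⟨⟨0, hm⟩, hU _⟩
  exact ⟨fun U hU => ⟨fun p hp hp_sum => (general U hU).1 p ⟨fun i => (hp i).le, hp_sum⟩
      fun i hi => absurd hi (hp i).ne', (general U hU).2.2.1⟩,
    fun hle U hUR hU => (general U hU).2.2.2 one_le_qV₁ one_le_qV₂ hle hUR⟩
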